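/- arXiv:2411.12119 — 3 statements merged into one kernel-verified Lean document; each statement's English description precedes it below -/
import Mathlib

section
/- (Theorem 4.2, Das Gupta et al. quadrant-probability inequality) Let k ≥ 1 and let t : [0,∞) → [0,∞) be a measurable function with ∫_0^∞ r^{k−1} t(r²) dr < ∞. Let R = (ρ_{ij}) and T = (τ_{ij}) be two positive definite correlation matrices such that x ↦ det(R)^{−1/2}·t(xᵀR^{−1}x) and x ↦ det(T)^{−1/2}·t(xᵀT^{−1}x) are probability densities on ℝ^k, and let X^R and X^T be random vectors with these respective densities. If ρ_{ij} ≥ τ_{ij} for all i, j, then for every a = (a_1, …, a_k) ∈ ℝ^k, P(X^R_i ≤ a_i for all 1 ≤ i ≤ k) ≥ P(X^T_i ≤ a_i for all 1 ≤ i ≤ k). -/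
/-! The argument is a reflection (polarization) argument carried out directly on the laws, without
differentiating in the correlations.

Write `ellip t Σ` for the measure with density `det(Σ)^(-1/2) t(xᵀ Σ⁻¹ x)`. By the linear change
of variables formula, an invertible `L` pushes `ellip t T` forward to `ellip t (L T Lᵀ)`
(`ellip_linear`).

Suppose first that `T ≤ R` differ only in row and column `i`, and have the same diagonal. There is
a linear form `ℓ` such that replacing the coordinate `x_i` by `ℓ · x` turns the scale matrix `T`
into `R` (`exists_form`). So the two quadrant probabilities are the `ellip t T`-measures of
`A ∩ {x_i ≤ a_i}` and `A ∩ {ℓ · x ≤ a_i}`, where `A = {x_j ≤ a_j, j ≠ i}`. As `x_i` and `ℓ · x`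
have the same variance under `T`, the `T⁻¹`-orthogonal reflection `σ` along `T n`, with
`n = ℓ - e_i`, exchanges these two forms and preserves `ellip t T`. At a point with
`x_i ≤ a_i < ℓ · x` it can only decrease every coordinate `x_j`, `j ≠ i`, because
`(T n)_j = R_{ij} - T_{ij} ≥ 0`. Hence `σ` sends the part of the first set outside the second into
the part of the second outside the first, which proves the inequality (`ellip_quad_le_of_row`).

In general the segment from `T` to `R` is cut into `N` equal pieces, and on each piece the rows are
updated one after the other. For `N` large all the intermediate matrices are positive definite,
since the quadratic form is bounded below uniformly along the segment. -/

open MeasureTheory Matrix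

/-- The elliptically contoured measure with generator `t` and scale matrix `S`. -/
noncomputable def ellip {k : ℕ} (t : ℝ → ℝ) (S : Matrix (Fin k) (Fin k) ℝ) :
    Measure (Fin k → ℝ) :=
  volume.withDensity fun x =>
    ENNReal.ofReal (S.det ^ (-(1/2) : ℝ) * t (x ⬝ᵥ S⁻¹.mulVec x))

lemma measurable_ellip_density {k : ℕ} {t : ℝ → ℝ} (ht : Measurable t)
    (S : Matrix (Fin k) (Fin k) ℝ) : Measurable fun x : Fin k → ℝ =>
      ENNReal.ofReal (S.det ^ (-(1/2) : ℝ) * t (x ⬝ᵥ S⁻¹.mulVec x)) := by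
  have h : Continuous fun x : Fin k → ℝ => x ⬝ᵥ S⁻¹.mulVec x := by fun_prop
  exact ((ht.comp h.measurable).const_mul _).ennreal_ofReal

lemma ellip_linear {k : ℕ} {t : ℝ → ℝ} (ht : Measurable t)
    {S R L : Matrix (Fin k) (Fin k) ℝ} (hS : S.PosDef) (hR : R.PosDef)
    (hL : L * S * Lᵀ = R) {s : Set (Fin k → ℝ)} (hs : MeasurableSet s) :
    ellip t R s = ellip t S (L.mulVec ⁻¹' s) := by
  have hSd := hS.det_pos
  have hRd := hR.det_pos
  have hdet : R.det = L.det ^ 2 * S.det := by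
    rw [← hL, det_mul, det_mul, det_transpose]; ring
  have hLd : L.det ≠ 0 := by
    intro h; rw [h] at hdet; simp at hdet; exact hRd.ne' hdet
  have hLu : IsUnit L.det := isUnit_iff_ne_zero.2 hLd
  have hLm : Measurable L.mulVec := by
    have : Continuous L.mulVec := by fun_prop
    exact this.measurable
  have hvol : (volume : Measure (Fin k → ℝ)) =
      ENNReal.ofReal |L.det| • Measure.map L.mulVec volume := by
    have h := Real.map_matrix_volume_pi_eq_smul_volume_pi hLd
    have h2 : (⇑(toLin' L) : (Fin k → ℝ) → Fin k → ℝ) = L.mulVec := by ext; simp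
    rw [h2] at h
    rw [h, smul_smul, ← ENNReal.ofReal_mul (abs_nonneg _), ← abs_mul, mul_inv_cancel₀ hLd]
    simp
  have hinv : Lᵀ * R⁻¹ * L = S⁻¹ := by
    have hLt : IsUnit Lᵀ.det := by rwa [det_transpose]
    rw [← hL, Matrix.mul_inv_rev, Matrix.mul_inv_rev, ← mul_assoc, mul_nonsing_inv _ hLt, one_mul, mul_assoc,
      nonsing_inv_mul _ hLu, mul_one]
  have hquad : ∀ x, L.mulVec x ⬝ᵥ R⁻¹.mulVec (L.mulVec x) = x ⬝ᵥ S⁻¹.mulVec x := by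
    intro x
    rw [← hinv, ← mulVec_mulVec, ← mulVec_mulVec, dotProduct_mulVec x, vecMul_transpose]
  have hcoef : |L.det| * R.det ^ (-(1/2) : ℝ) = S.det ^ (-(1/2) : ℝ) := by
    rw [hdet, Real.mul_rpow (sq_nonneg _) hSd.le, ← mul_assoc, ← sq_abs,
      ← Real.rpow_natCast, ← Real.rpow_mul (abs_nonneg _)]
    have : ((2 : ℕ) : ℝ) * (-(1/2)) = -1 := by norm_num
    rw [this, Real.rpow_neg_one, mul_inv_cancel₀ (abs_ne_zero.2 hLd), one_mul]
  unfold ellip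
  rw [withDensity_apply _ hs, withDensity_apply _ (hLm hs), hvol, Measure.restrict_smul,
    lintegral_smul_measure, setLIntegral_map hs (measurable_ellip_density ht R) hLm, smul_eq_mul,
    ← hvol]
  refine (lintegral_const_mul _ ((measurable_ellip_density ht R).comp hLm)).symm.trans ?_
  refine lintegral_congr fun x => ?_
  simp only [Function.comp_apply]
  rw [← ENNReal.ofReal_mul (abs_nonneg _), ← mul_assoc, hcoef, hquad]

lemma PosDef.dot_comm {k : ℕ} {T : Matrix (Fin k) (Fin k) ℝ} (hT : T.PosDef) (x y : Fin k → ℝ) :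
    x ⬝ᵥ T.mulVec y = y ⬝ᵥ T.mulVec x := by
  have : Tᵀ = T := by simpa using hT.isHermitian.eq
  conv_lhs => rw [dotProduct_mulVec, ← mulVec_transpose, this, dotProduct_comm]

/-- If `R` and `T` agree outside row and column `i` and have the same `i`-th diagonal entry, some
linear form `ℓ` has `T`-covariances with the coordinates `j ≠ i`, and `T`-variance, equal to those
prescribed by row `i` of `R`. -/
lemma exists_form {k : ℕ} {R T : Matrix (Fin k) (Fin k) ℝ}
    (hR : R.PosDef) (hT : T.PosDef) (i : Fin k)
    (hoff : ∀ j m, j ≠ i → m ≠ i → T j m = R j m) :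
    ∃ l : Fin k → ℝ, (∀ j, j ≠ i → T.mulVec l j = R j i) ∧ l ⬝ᵥ T.mulVec l = R i i := by
  have hRu := (isUnit_iff_isUnit_det _).1 hR.isUnit
  have hTu := (isUnit_iff_isUnit_det _).1 hT.isUnit
  set e : Fin k → ℝ := Pi.single i 1 with he
  set q := R⁻¹.mulVec e with hq
  set p := T⁻¹.mulVec e with hp
  have hRq : R.mulVec q = e := by rw [hq, mulVec_mulVec, mul_nonsing_inv _ hRu, one_mulVec]
  have hTp : T.mulVec p = e := by rw [hp, mulVec_mulVec, mul_nonsing_inv _ hTu, one_mulVec]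
  have hqi : 0 < q i := by
    have := hR.inv.diag_pos (i := i)
    simpa [hq, he] using this
  have hpi : 0 < p i := by
    have := hT.inv.diag_pos (i := i)
    simpa [hp, he] using this
  -- `z` is supported off `i` and solves the covariance equations; adding a multiple of `p`, which
  -- is `T`-orthogonal to the coordinates `j ≠ i`, corrects the variance.
  set z := e - (q i)⁻¹ • q with hz
  have hzi : z i = 0 := by simp [hz, he, hqi.ne']
  have hRz : ∀ j, R.mulVec z j = R j i - (q i)⁻¹ * e j := by
    intro j
    rw [hz, mulVec_sub, mulVec_smul, hRq]
    simp [he]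
  have hTz : ∀ j, j ≠ i → T.mulVec z j = R j i := by
    intro j hj
    have h1 : T.mulVec z j = R.mulVec z j := by
      simp only [mulVec, dotProduct]
      refine Finset.sum_congr rfl fun m _ => ?_
      by_cases hm : m = i
      · rw [hm, hzi]; simp
      · rw [hoff j m hj hm]
    rw [h1, hRz]; simp [he, hj]
  have hsym : ∀ j, R i j = R j i := fun j => by simpa using (hR.isHermitian.apply j i)
  have hzz : z ⬝ᵥ T.mulVec z = R i i - (q i)⁻¹ := by
    have h1 : z ⬝ᵥ T.mulVec z = R.mulVec z i := by
      simp only [mulVec, dotProduct]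
      refine Finset.sum_congr rfl fun j _ => ?_
      by_cases hj : j = i
      · rw [hj, hzi]; simp
      · have := hTz j hj
        simp only [mulVec, dotProduct] at this
        rw [this, hsym, mul_comm]
    rw [h1, hRz]; simp [he]
  set s := Real.sqrt ((p i)⁻¹ * (q i)⁻¹) with hs
  have hs2 : s * s = (p i)⁻¹ * (q i)⁻¹ := Real.mul_self_sqrt (by positivity)
  refine ⟨z + s • p, fun j hj => ?_, ?_⟩
  · rw [mulVec_add, mulVec_smul, hTp, Pi.add_apply, hTz j hj]
    simp [he, hj]
  · have hpz : p ⬝ᵥ T.mulVec z = 0 := by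
      rw [PosDef.dot_comm hT, hTp]; simp [he, hzi]
    rw [mulVec_add, mulVec_smul, hTp, add_dotProduct, dotProduct_add, dotProduct_add, hzz,
      smul_dotProduct, hpz, smul_dotProduct]
    simp only [he, dotProduct_smul, dotProduct_single, hzi, smul_eq_mul]
    have : s * (s * (p i * 1)) = (q i)⁻¹ := by
      rw [← mul_assoc, hs2]; field_simp
    rw [this]; ring

lemma single_dot_mulVec {k : ℕ} (T : Matrix (Fin k) (Fin k) ℝ) (i : Fin k) (x : Fin k → ℝ) :
    (Pi.single i 1 : Fin k → ℝ) ⬝ᵥ T.mulVec x = T.mulVec x i := by simp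

/-- Replacing the `i`-th coordinate by the form `l` turns the scale matrix `T` into `R`. -/
lemma updateRow_conj {k : ℕ} {R T : Matrix (Fin k) (Fin k) ℝ}
    (hR : R.PosDef) (hT : T.PosDef) (i : Fin k)
    (hoff : ∀ j m, j ≠ i → m ≠ i → T j m = R j m) {l : Fin k → ℝ}
    (h1 : ∀ j, j ≠ i → T.mulVec l j = R j i) (h2 : l ⬝ᵥ T.mulVec l = R i i) :
    (updateRow 1 i l) * T * (updateRow 1 i l)ᵀ = R := by
  have hsym : ∀ j, R i j = R j i := fun j => by simpa using (hR.isHermitian.apply j i)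
  ext a b
  have key : ((updateRow 1 i l) * T * (updateRow 1 i l)ᵀ) a b =
      (updateRow 1 i l) a ⬝ᵥ T.mulVec ((updateRow 1 i l) b) := by
    rw [mul_assoc, mul_apply]
    simp only [dotProduct, mulVec, mul_apply, transpose_apply]
  have hrow : ∀ c, c ≠ i →
      (updateRow (1 : Matrix (Fin k) (Fin k) ℝ) i l) c = Pi.single c 1 := by
    intro c hc
    rw [updateRow_ne hc]
    ext m; simp [one_apply, Pi.single_apply, eq_comm]
  rw [key]
  by_cases ha : a = i
  · subst ha
    rw [updateRow_self]
    by_cases hb : b = a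
    · rw [hb, updateRow_self, h2]
    · rw [hrow b hb, PosDef.dot_comm hT, single_dot_mulVec, h1 b hb, hsym]
  · rw [hrow a ha, single_dot_mulVec]
    by_cases hb : b = i
    · rw [hb, updateRow_self, h1 a ha]
    · rw [hrow b hb]; simp [hoff a b ha hb]

/-- The reflection `x ↦ x - 2 (n · x) / (nᵀ T n) • T n`, orthogonal for the form `T⁻¹`. For `n = 0`
the division by zero makes it the identity. -/
noncomputable def reflMat {k : ℕ} (T : Matrix (Fin k) (Fin k) ℝ) (n : Fin k → ℝ) :
    Matrix (Fin k) (Fin k) ℝ :=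
  1 - (2 / (n ⬝ᵥ T.mulVec n)) • vecMulVec (T.mulVec n) n

lemma reflMat_mulVec {k : ℕ} (T : Matrix (Fin k) (Fin k) ℝ) (n x : Fin k → ℝ) :
    (reflMat T n).mulVec x = x - (2 / (n ⬝ᵥ T.mulVec n) * (n ⬝ᵥ x)) • T.mulVec n := by
  rw [reflMat, sub_mulVec, one_mulVec, smul_mulVec, vecMulVec_mulVec]
  ext j; simp; ring

lemma reflMat_conj {k : ℕ} {T : Matrix (Fin k) (Fin k) ℝ} (hT : T.PosDef) (n : Fin k → ℝ) :
    reflMat T n * T * (reflMat T n)ᵀ = T := by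
  have hTt : Tᵀ = T := by simpa using hT.isHermitian.eq
  by_cases hn : n = 0
  · simp [reflMat, hn]
  have hpos : 0 < n ⬝ᵥ T.mulVec n := by simpa using hT.dotProduct_mulVec_pos hn
  have hv : n ᵥ* T = T.mulVec n := by
    rw [← mulVec_transpose, hTt]
  rw [reflMat]
  set d := n ⬝ᵥ T.mulVec n with hd
  have hd' : T.mulVec n ⬝ᵥ n = d := dotProduct_comm _ _
  simp only [transpose_sub, transpose_one, transpose_smul, transpose_vecMulVec, sub_mul, mul_sub,
    one_mul, mul_one, smul_mul_assoc, mul_smul_comm, vecMulVec_mul, mul_vecMulVec, hv,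
    vecMulVec_mulVec, hd']
  ext a b
  simp [vecMulVec_apply]
  field_simp
  ring

/-- The row step: raising the entries of a single row and column raises quadrant
probabilities. -/
lemma ellip_quad_le_of_row {k : ℕ} {t : ℝ → ℝ} (ht : Measurable t)
    {R T : Matrix (Fin k) (Fin k) ℝ} (hR : R.PosDef) (hT : T.PosDef) (i : Fin k)
    (hoff : ∀ j m, j ≠ i → m ≠ i → T j m = R j m) (hii : T i i = R i i)
    (hle : ∀ j, T j i ≤ R j i) (a : Fin k → ℝ) :
    ellip t T {x | ∀ j, x j ≤ a j} ≤ ellip t R {x | ∀ j, x j ≤ a j} := by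
  obtain ⟨l, h1, h2⟩ := exists_form hR hT i hoff
  have hQ : MeasurableSet {x : Fin k → ℝ | ∀ j, x j ≤ a j} := by
    rw [Set.ofPred_forall]
    exact MeasurableSet.iInter fun j => measurableSet_le (measurable_pi_apply j) measurable_const
  rw [ellip_linear ht hT hR (updateRow_conj hR hT i hoff h1 h2) hQ]
  set Q := {x : Fin k → ℝ | ∀ j, x j ≤ a j} with hQdef
  set Q' := (updateRow (1 : Matrix (Fin k) (Fin k) ℝ) i l).mulVec ⁻¹' Q with hQ'def
  have hQ' : MeasurableSet Q' := by
    have : Continuous (updateRow (1 : Matrix (Fin k) (Fin k) ℝ) i l).mulVec := by fun_prop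
    exact this.measurable hQ
  have memQ' : ∀ x, x ∈ Q' ↔ (∀ j, j ≠ i → x j ≤ a j) ∧ l ⬝ᵥ x ≤ a i := by
    intro x
    have hu : (updateRow (1 : Matrix (Fin k) (Fin k) ℝ) i l).mulVec x =
        Function.update x i (l ⬝ᵥ x) := by
      rw [updateRow_mulVec, one_mulVec]
    simp only [hQ'def, hQdef, Set.mem_preimage, Set.mem_ofPred_eq, hu]
    constructor
    · intro h
      refine ⟨fun j hj => ?_, ?_⟩
      · simpa [hj] using h j
      · simpa using h i
    · rintro ⟨h, h'⟩ j
      by_cases hj : j = i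
      · subst hj; simpa using h'
      · simpa [hj] using h j hj
  set n : Fin k → ℝ := l - Pi.single i 1 with hn
  have hTn : ∀ j, T.mulVec n j = T.mulVec l j - T j i := by
    intro j; rw [hn, mulVec_sub]; simp
  have hTn0 : ∀ j, j ≠ i → 0 ≤ T.mulVec n j := by
    intro j hj; rw [hTn, h1 j hj]; linarith [hle j]
  have hnx : ∀ x, n ⬝ᵥ x = l ⬝ᵥ x - x i := by
    intro x; rw [hn, sub_dotProduct]; simp
  have hlTe : l ⬝ᵥ T.mulVec (Pi.single i 1) = T.mulVec l i := by
    rw [PosDef.dot_comm hT, single_dot_mulVec]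
  -- Equality of the two variances makes the reflection along `T n` exchange the two forms.
  have hnn : n ⬝ᵥ T.mulVec n = -2 * T.mulVec n i := by
    rw [hnx, hn, mulVec_sub, dotProduct_sub, hlTe, h2]
    simp [hii]; ring
  have hlTn : l ⬝ᵥ T.mulVec n = - T.mulVec n i := by
    have := hnx (T.mulVec n); linarith
  have hmap : Q \ Q' ⊆ (reflMat T n).mulVec ⁻¹' (Q' \ Q) := by
    rintro x ⟨hx, hx'⟩
    have hxl : a i < l ⬝ᵥ x := by
      by_contra h
      exact hx' ((memQ' x).2 ⟨fun j _ => hx j, not_lt.1 h⟩)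
    have hxi : x i ≤ a i := hx i
    have hnpos : 0 < n ⬝ᵥ x := by rw [hnx]; linarith
    have hn0 : n ≠ 0 := by intro h; rw [h] at hnpos; simp at hnpos
    have hpos : 0 < n ⬝ᵥ T.mulVec n := by simpa using hT.dotProduct_mulVec_pos hn0
    have hc : 2 / (n ⬝ᵥ T.mulVec n) * T.mulVec n i = -1 := by
      rw [hnn] at hpos ⊢
      field_simp [show T.mulVec n i ≠ 0 by intro h; simp [h] at hpos]
    have hval : ∀ j, (reflMat T n).mulVec x j =
        x j - 2 / (n ⬝ᵥ T.mulVec n) * (n ⬝ᵥ x) * T.mulVec n j := by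
      intro j; rw [reflMat_mulVec]; simp
    have hvi : (reflMat T n).mulVec x i = l ⬝ᵥ x := by
      rw [hval, mul_right_comm, hc, hnx]; ring
    have hvl : l ⬝ᵥ (reflMat T n).mulVec x = x i := by
      rw [reflMat_mulVec, dotProduct_sub, dotProduct_smul, hlTn, smul_eq_mul, mul_neg,
        mul_right_comm, hc, hnx]; ring
    refine ⟨(memQ' _).2 ⟨fun j hj => ?_, by rw [hvl]; exact hxi⟩, fun h => ?_⟩
    · rw [hval]
      have := mul_nonneg (mul_nonneg (div_nonneg zero_le_two hpos.le) hnpos.le) (hTn0 j hj)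
      have := hx j
      linarith
    · have := h i
      rw [hvi] at this
      linarith
  have hdiff : ellip t T (Q \ Q') ≤ ellip t T (Q' \ Q) := by
    rw [ellip_linear ht hT hT (reflMat_conj hT n) (hQ'.diff hQ)]
    exact measure_mono hmap
  rw [← measure_inter_add_sdiff Q hQ', ← measure_inter_add_sdiff Q' hQ, Set.inter_comm Q' Q]
  gcongr

/-- A positive definite form dominates a positive multiple of the squared sup norm. -/
lemma PosDef.exists_lower {k : ℕ} {T : Matrix (Fin k) (Fin k) ℝ} (hT : T.PosDef) :
    ∃ c : ℝ, 0 < c ∧ ∀ x : Fin k → ℝ, c * ‖x‖ ^ 2 ≤ x ⬝ᵥ T.mulVec x := by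
  obtain ⟨c, hc, h⟩ := (isCompact_sphere (0 : Fin k → ℝ) 1).exists_forall_le' (a := (0 : ℝ))
    (f := fun x => x ⬝ᵥ T.mulVec x) (by fun_prop) (fun x hx => by
      have hx0 : x ≠ 0 := by
        rintro rfl; simp at hx
      simpa using hT.dotProduct_mulVec_pos hx0)
  refine ⟨c, hc, fun x => ?_⟩
  by_cases hx : x = 0
  · simp [hx]
  have hnx : 0 < ‖x‖ := norm_pos_iff.2 hx
  have := h (‖x‖⁻¹ • x) (by simp [norm_smul, hnx.ne'])
  simp only [mulVec_smul, smul_dotProduct, dotProduct_smul, smul_eq_mul] at this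
  calc c * ‖x‖ ^ 2 ≤ (‖x‖⁻¹ * (‖x‖⁻¹ * x ⬝ᵥ T.mulVec x)) * ‖x‖ ^ 2 := by gcongr
    _ = _ := by field_simp

lemma quad_lower {k : ℕ} {E : Matrix (Fin k) (Fin k) ℝ} {δ : ℝ}
    (hE : ∀ i j, |E i j| ≤ δ) (x : Fin k → ℝ) :
    -(δ * k ^ 2 * ‖x‖ ^ 2) ≤ x ⬝ᵥ E.mulVec x := by
  have h : |x ⬝ᵥ E.mulVec x| ≤ ∑ _i : Fin k, ∑ _j : Fin k, δ * ‖x‖ ^ 2 := by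
    simp only [dotProduct, mulVec, Finset.mul_sum]
    refine (Finset.abs_sum_le_sum_abs _ _).trans (Finset.sum_le_sum fun i _ => ?_)
    refine (Finset.abs_sum_le_sum_abs _ _).trans (Finset.sum_le_sum fun j _ => ?_)
    have hi : |x i| ≤ ‖x‖ := norm_le_pi_norm x i
    have hj : |x j| ≤ ‖x‖ := norm_le_pi_norm x j
    have hδ : 0 ≤ δ := (abs_nonneg _).trans (hE i j)
    rw [abs_mul, abs_mul]
    calc |x i| * (|E i j| * |x j|) ≤ ‖x‖ * (δ * ‖x‖) := by
          gcongr; exact hE i j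
      _ = _ := by ring
  simp only [Finset.sum_const, Finset.card_univ, Fintype.card_fin, nsmul_eq_mul] at h
  have := neg_le_of_abs_le h
  linarith [this, show (k : ℝ) * (k * (δ * ‖x‖ ^ 2)) = δ * k ^ 2 * ‖x‖ ^ 2 by ring]

/-- The matrix that keeps the entries of `D` whose row or column index lies in `s`, the others being
replaced by zero. -/
def rowPart {k : ℕ} (D : Matrix (Fin k) (Fin k) ℝ) (s : Finset (Fin k)) :
    Matrix (Fin k) (Fin k) ℝ :=
  Matrix.of fun i j => if i ∈ s ∨ j ∈ s then D i j else 0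

/-- Quadrant probabilities increase from `M` to `M + D`, the rows and columns being updated one
at a time, as long as all the intermediate matrices are positive definite. -/
lemma ellip_quad_le_of_rows {k : ℕ} {t : ℝ → ℝ} (ht : Measurable t)
    {M D : Matrix (Fin k) (Fin k) ℝ} (hpos : ∀ s, (M + rowPart D s).PosDef)
    (hD : ∀ i j, 0 ≤ D i j) (hD0 : ∀ i, D i i = 0) (a : Fin k → ℝ) :
    ellip t M {x | ∀ j, x j ≤ a j} ≤ ellip t (M + D) {x | ∀ j, x j ≤ a j} := by
  have key : ∀ s : Finset (Fin k), ellip t M {x | ∀ j, x j ≤ a j} ≤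
      ellip t (M + rowPart D s) {x | ∀ j, x j ≤ a j} := by
    intro s
    induction s using Finset.induction_on with
    | empty =>
      have : rowPart D ∅ = 0 := by ext; simp [rowPart]
      rw [this, add_zero]
    | insert i s hi ih =>
      refine ih.trans (ellip_quad_le_of_row ht (hpos _) (hpos _) i ?_ ?_ ?_ a)
      · intro j m hj hm
        simp [rowPart, hj, hm]
      · simp [rowPart, hD0]
      · intro j
        simp only [rowPart, Matrix.add_apply, of_apply]
        have := hD j i
        split_ifs <;> simp_all
  have := key Finset.univ
  have h : rowPart D Finset.univ = D := by ext; simp [rowPart]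
  rwa [h] at this

lemma ellip_quad_le {k : ℕ} {t : ℝ → ℝ} (ht : Measurable t)
    {R T : Matrix (Fin k) (Fin k) ℝ} (hR : R.PosDef) (hT : T.PosDef)
    (hdiag : ∀ i, T i i = R i i) (hle : ∀ i j, T i j ≤ R i j) (a : Fin k → ℝ) :
    ellip t T {x | ∀ j, x j ≤ a j} ≤ ellip t R {x | ∀ j, x j ≤ a j} := by
  obtain ⟨c₁, hc₁, h₁⟩ := PosDef.exists_lower hR
  obtain ⟨c₂, hc₂, h₂⟩ := PosDef.exists_lower hT
  set c := min c₁ c₂ with hc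
  have hcpos : 0 < c := lt_min hc₁ hc₂
  set D := R - T with hDdef
  have hD : ∀ i j, 0 ≤ D i j := fun i j => sub_nonneg.2 (hle i j)
  have hDsym : D.IsHermitian := hR.isHermitian.sub hT.isHermitian
  set C := ∑ i, ∑ j, D i j with hCdef
  have hDC : ∀ i j, D i j ≤ C := fun i j =>
    (Finset.single_le_sum (f := fun j => D i j) (fun m _ => hD i m) (Finset.mem_univ j)).trans
      (Finset.single_le_sum (f := fun i => ∑ j, D i j)
        (fun m _ => Finset.sum_nonneg fun b _ => hD m b) (Finset.mem_univ i))
  obtain ⟨N₀, hN₀⟩ := exists_nat_gt (C * k ^ 2 / c)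
  set N := N₀ + 1 with hN
  have hNpos : (0 : ℝ) < N := by positivity
  have hNC : C / N * k ^ 2 < c := by
    have : C * k ^ 2 / c < N := hN₀.trans (by simp [hN])
    rw [div_lt_iff₀ hcpos] at this
    rw [div_mul_eq_mul_div, div_lt_iff₀ hNpos]
    linarith
  have hpos : ∀ m : ℕ, m ≤ N → ∀ s,
      (T + ((m : ℝ) / N) • D + rowPart ((N : ℝ)⁻¹ • D) s).PosDef := by
    intro m hm s
    have hu0 : 0 ≤ (m : ℝ) / N := by positivity
    have hu1 : (m : ℝ) / N ≤ 1 := by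
      rw [div_le_one hNpos]; exact_mod_cast hm
    set u := (m : ℝ) / N
    refine PosDef.of_dotProduct_mulVec_pos ?_ fun x hx => ?_
    · have hDs : ∀ i j, D j i = D i j := fun i j => by simpa using hDsym.apply i j
      have hTs : ∀ i j, T j i = T i j := fun i j => by simpa using hT.isHermitian.apply i j
      ext i j
      simp [rowPart, hDs i j, hTs i j, or_comm]
    · have hE : ∀ i j, |rowPart ((N : ℝ)⁻¹ • D) s i j| ≤ C / N := by
        intro i j
        have h0 : 0 ≤ C / N := div_nonneg ((hD i j).trans (hDC i j)) hNpos.le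
        simp only [rowPart, of_apply]
        split_ifs
        · rw [Matrix.smul_apply, smul_eq_mul, abs_of_nonneg (by have := hD i j; positivity),
            div_eq_inv_mul]
          gcongr
          exact hDC i j
        · simpa using h0
      have hlow := quad_lower hE x
      have hxn : 0 < ‖x‖ ^ 2 := by have := norm_pos_iff.2 hx; positivity
      have hRx : c * ‖x‖ ^ 2 ≤ x ⬝ᵥ R.mulVec x :=
        (mul_le_mul_of_nonneg_right (min_le_left _ _) hxn.le).trans (h₁ x)
      have hTx : c * ‖x‖ ^ 2 ≤ x ⬝ᵥ T.mulVec x :=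
        (mul_le_mul_of_nonneg_right (min_le_right _ _) hxn.le).trans (h₂ x)
      have hs := mul_lt_mul_of_pos_right hNC hxn
      simp only [star_trivial, add_mulVec, dotProduct_add, smul_mulVec, dotProduct_smul,
        hDdef, sub_mulVec, dotProduct_sub, smul_eq_mul] at hlow ⊢
      nlinarith [mul_le_mul_of_nonneg_left hRx hu0,
        mul_le_mul_of_nonneg_left hTx (sub_nonneg.2 hu1)]
  have key : ∀ m : ℕ, m ≤ N → ellip t T {x | ∀ j, x j ≤ a j} ≤
      ellip t (T + ((m : ℝ) / N) • D) {x | ∀ j, x j ≤ a j} := by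
    intro m
    induction m with
    | zero => intro _; simp
    | succ m ih =>
      intro hm
      refine (ih (by omega)).trans ?_
      have := ellip_quad_le_of_rows ht (hpos m (by omega))
        (fun i j => by simpa using mul_nonneg (inv_nonneg.2 hNpos.le) (hD i j))
        (fun i => by simp [hDdef, hdiag]) a
      have hstep : T + (((m + 1 : ℕ) : ℝ) / N) • D = T + ((m : ℝ) / N) • D + (N : ℝ)⁻¹ • D := by
        rw [add_assoc, ← add_smul]
        congr 2
        push_cast
        field_simp
      rwa [hstep]
  have := key N le_rfl
  rwa [div_self hNpos.ne', one_smul, hDdef, add_sub_cancel] at this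

/-- Das Gupta et al.: for elliptically contoured densities with the same
generator `t`, increasing the correlations entrywise increases quadrant probabilities. -/
theorem elliptical_quadrant_probability_monotone
    {k : ℕ} (hk : 1 ≤ k)
    (t : ℝ → ℝ) (htmeas : Measurable t) (htnn : ∀ x : ℝ, 0 ≤ x → 0 ≤ t x)
    (htint : IntegrableOn (fun r : ℝ => r ^ (k - 1) * t (r ^ 2)) (Set.Ioi (0:ℝ)))
    (R T : Matrix (Fin k) (Fin k) ℝ)
    (hRpos : R.PosDef) (hTpos : T.PosDef)
    (hRdiag : ∀ i, R i i = 1) (hTdiag : ∀ i, T i i = 1)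
    (μR μT : Measure (Fin k → ℝ))
    (hμR : μR = volume.withDensity fun x =>
      ENNReal.ofReal (R.det ^ (-(1/2) : ℝ) * t (x ⬝ᵥ R⁻¹.mulVec x)))
    (hμT : μT = volume.withDensity fun x =>
      ENNReal.ofReal (T.det ^ (-(1/2) : ℝ) * t (x ⬝ᵥ T⁻¹.mulVec x)))
    (hPR : IsProbabilityMeasure μR) (hPT : IsProbabilityMeasure μT)
    (hle : ∀ i j, T i j ≤ R i j)
    (a : Fin k → ℝ) :
    μT {x | ∀ i, x i ≤ a i} ≤ μR {x | ∀ i, x i ≤ a i} := by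
  subst hμR hμT
  exact ellip_quad_le htmeas hRpos hTpos (fun i => by rw [hRdiag, hTdiag]) hle a
end

section
/- (Corollary of Theorem 4.2 used in the proofs of Theorems 4.1 and 5.3) Let (X_1, …, X_n) have an elliptically contoured density with generator t and correlation matrix Σ = (ρ_{ij}) such that ρ_{ij} ≥ δ for all i ≠ j, where 0 < δ < 1, and let (Y_1, …, Y_n) have an elliptically contoured density with the same generator t and equicorrelation matrix Γ_n(δ). Then for every c ∈ ℝ, P(X_i > c for some 1 ≤ i ≤ n) ≤ P(Y_i > c for some 1 ≤ i ≤ n). -/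
/-!
The complementary statement is that the probability of `{x | ∀ i, x i ≤ c}` is monotone in the
off-diagonal entries of the scale matrix, for every generator `t` (Slepian's inequality for
elliptically contoured laws, `ellipticalLaw_orthant_mono`).

If `M = A Aᵀ`, the law with scale matrix `M` is the image under `A` of the spherical measure with
density `t (z ⬝ᵥ z)`, so the orthant probability is the spherical measure of the polyhedron
`{z | ∀ k, A k ⬝ᵥ z ≤ c}` cut out by the rows of `A` (`ellipticalLaw_mul_transpose_apply`).

Suppose `M` and `M'` differ only in row and column `j`, where `M'` is larger off the diagonal. They
factor as `A Aᵀ` and `B Bᵀ` with `A`, `B` differing only in row `j` (`exists_factors`). The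
orthogonal reflection exchanging `A j` and `B j` preserves the spherical measure, and it maps the
points of the polyhedron of `A` outside that of `B` into the polyhedron of `B` outside that of `A`:
at such a point `z` one has `(A j - B j) ⬝ᵥ z < 0`, and since `A k ⬝ᵥ A j ≤ A k ⬝ᵥ B j`, the
reflection does not increase `A k ⬝ᵥ z` for any `k ≠ j` (`sphericalLaw_le_of_replace_row`).

A general pair `M ≤ M'` is joined by a staircase of such one-row changes. Going from `M` to `M'` one
row at a time may leave the positive definite cone, so the segment from `M` to `M'` is cut into `N`
equal pieces, and each piece is traversed row by row. The segment is uniformly coercive, so for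
large `N` all intermediate matrices are positive definite.
-/

open MeasureTheory Matrix

/-! ### Elliptical laws as linear images of spherical ones -/

/-- The measure with elliptically contoured density with generator `t` and scale matrix `M`; it is
not normalized, and `t` is arbitrary. -/
noncomputable def ellipticalLaw {n : ℕ} (t : ℝ → ℝ) (M : Matrix (Fin n) (Fin n) ℝ) :
    Measure (Fin n → ℝ) :=
  volume.withDensity fun x =>
    ENNReal.ofReal (M.det ^ (-(1/2) : ℝ) * t (x ⬝ᵥ M⁻¹.mulVec x))

/-- The rotation invariant measure on `ℝⁿ` with density `z ↦ t (|z|²)`, not normalized. -/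
noncomputable def sphericalLaw (n : ℕ) (t : ℝ → ℝ) : Measure (Fin n → ℝ) :=
  volume.withDensity fun z => ENNReal.ofReal (t (z ⬝ᵥ z))

lemma ellipticalLaw_mul_transpose_apply {n : ℕ} {t : ℝ → ℝ} (ht : Measurable t)
    (A : Matrix (Fin n) (Fin n) ℝ) (hA : A.det ≠ 0) {Q : Set (Fin n → ℝ)}
    (hQ : MeasurableSet Q) :
    ellipticalLaw t (A * Aᵀ) Q = sphericalLaw n t ((fun z => A *ᵥ z) ⁻¹' Q) := by
  have hmeas : Measurable (fun z : Fin n → ℝ => A *ᵥ z) := by fun_prop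
  have hmeas' : Measurable fun x : Fin n → ℝ => t (x ⬝ᵥ (A * Aᵀ)⁻¹ *ᵥ x) := by
    apply ht.comp
    unfold dotProduct
    fun_prop
  have hdet : (A * Aᵀ).det ^ (-(1/2) : ℝ) = |A.det⁻¹| := by
    rw [det_mul, det_transpose, Real.rpow_neg (mul_self_nonneg _), ← Real.sqrt_eq_rpow,
      Real.sqrt_mul_self_eq_abs, abs_inv]
  have hquad : ∀ z, (A *ᵥ z) ⬝ᵥ (A * Aᵀ)⁻¹ *ᵥ (A *ᵥ z) = z ⬝ᵥ z := by
    intro z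
    have h1 : A⁻¹ * A = 1 := nonsing_inv_mul _ (isUnit_iff_ne_zero.mpr hA)
    have h2 : Aᵀ * (Aᵀ)⁻¹ = 1 :=
      mul_nonsing_inv _ (by rw [det_transpose]; exact isUnit_iff_ne_zero.mpr hA)
    rw [Matrix.mul_inv_rev, mulVec_mulVec, Matrix.mul_assoc, h1, Matrix.mul_one, dotProduct_mulVec,
      ← mulVec_transpose, mulVec_mulVec, transpose_nonsing_inv, transpose_transpose, h1, one_mulVec]
  have hmap := Real.map_matrix_volume_pi_eq_smul_volume_pi hA
  rw [ellipticalLaw, sphericalLaw, withDensity_apply _ hQ, withDensity_apply _ (hmeas hQ), hdet]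
  simp_rw [ENNReal.ofReal_mul (abs_nonneg _)]
  rw [lintegral_const_mul _ hmeas'.ennreal_ofReal, ← smul_eq_mul, ← lintegral_smul_measure,
    ← Measure.restrict_smul, ← hmap]
  rw [show (⇑(toLin' A)) = (fun z : Fin n → ℝ => A *ᵥ z) from by ext; simp]
  rw [setLIntegral_map hQ hmeas'.ennreal_ofReal hmeas]
  simp_rw [hquad]

/-! ### The reflection argument -/

/-- The orthogonal reflection exchanging two vectors of equal length. The last clause is the
Householder formula, with `κ = 2 / |a - b|²` (and `κ = 0` when `a = b`). -/
lemma exists_reflection {n : ℕ} (a b : Fin n → ℝ) (hab : b ⬝ᵥ b = a ⬝ᵥ a) :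
    ∃ S : Matrix (Fin n) (Fin n) ℝ, S * Sᵀ = 1 ∧
      (∀ z, a ⬝ᵥ (S *ᵥ z) = b ⬝ᵥ z) ∧ (∀ z, b ⬝ᵥ (S *ᵥ z) = a ⬝ᵥ z) ∧
      ∃ κ : ℝ, 0 ≤ κ ∧ ∀ w z, w ⬝ᵥ (S *ᵥ z) =
        w ⬝ᵥ z - κ * ((a - b) ⬝ᵥ z) * (w ⬝ᵥ a - w ⬝ᵥ b) := by
  set v := a - b with hv
  rcases eq_or_ne v 0 with h0 | h0
  · have : a = b := sub_eq_zero.mp h0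
    subst this
    exact ⟨1, by simp, by simp, by simp, 0, le_rfl, by simp⟩
  have hvv : 0 < v ⬝ᵥ v := by
    have := dotProduct_star_self_pos_iff.mpr h0
    simpa using this
  have hva : v ⬝ᵥ v = 2 * (v ⬝ᵥ a) := by
    simp only [hv, sub_dotProduct, dotProduct_sub, hab, dotProduct_comm b a]; ring
  have hvb : v ⬝ᵥ v = - 2 * (v ⬝ᵥ b) := by
    simp only [hv, sub_dotProduct, dotProduct_sub, hab, dotProduct_comm b a]; ring
  have key : ∀ w z, w ⬝ᵥ ((1 - (2 / (v ⬝ᵥ v)) • vecMulVec v v) *ᵥ z) =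
      w ⬝ᵥ z - 2 / (v ⬝ᵥ v) * (v ⬝ᵥ z) * (w ⬝ᵥ v) := by
    intro w z
    simp [sub_mulVec, smul_mulVec, vecMulVec_mulVec, dotProduct_sub]
    ring
  refine ⟨1 - (2 / (v ⬝ᵥ v)) • vecMulVec v v, ?_, ?_, ?_, 2 / (v ⬝ᵥ v), by positivity, ?_⟩
  · have hsq : vecMulVec v v * vecMulVec v v = (v ⬝ᵥ v) • vecMulVec v v := by
      rw [vecMulVec_mul_vecMulVec]; ext i j; simp [vecMulVec]; ring
    have ht : (1 - (2 / (v ⬝ᵥ v)) • vecMulVec v v)ᵀ = 1 - (2 / (v ⬝ᵥ v)) • vecMulVec v v := by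
      simp [transpose_vecMulVec]
    rw [ht, Matrix.sub_mul, Matrix.mul_sub, Matrix.mul_sub, Matrix.one_mul, Matrix.mul_one, Matrix.one_mul,
      smul_mul_smul_comm, hsq, smul_smul]
    rw [show 2 / (v ⬝ᵥ v) * (2 / (v ⬝ᵥ v)) * (v ⬝ᵥ v) = 2 * (2 / (v ⬝ᵥ v)) by field_simp]
    module
  · intro z
    rw [key, dotProduct_comm a v]
    have : v ⬝ᵥ z = a ⬝ᵥ z - b ⬝ᵥ z := by simp [hv, sub_dotProduct]
    rw [show 2 / (v ⬝ᵥ v) * (v ⬝ᵥ z) * (v ⬝ᵥ a) = (v ⬝ᵥ z) * (2 * (v ⬝ᵥ a) / (v ⬝ᵥ v)) by ring,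
      ← hva, div_self hvv.ne', this]
    ring
  · intro z
    rw [key, dotProduct_comm b v]
    have : v ⬝ᵥ z = a ⬝ᵥ z - b ⬝ᵥ z := by simp [hv, sub_dotProduct]
    rw [show 2 / (v ⬝ᵥ v) * (v ⬝ᵥ z) * (v ⬝ᵥ b) = - (v ⬝ᵥ z) * (-2 * (v ⬝ᵥ b) / (v ⬝ᵥ v)) by ring,
      ← hvb, div_self hvv.ne', this]
    ring
  · intro w z
    rw [key]
    simp [hv, dotProduct_sub]

lemma sphericalLaw_preimage {n : ℕ} {t : ℝ → ℝ} (ht : Measurable t)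
    (S : Matrix (Fin n) (Fin n) ℝ) (hS : S * Sᵀ = 1) {Q : Set (Fin n → ℝ)}
    (hQ : MeasurableSet Q) :
    sphericalLaw n t ((fun z => S *ᵥ z) ⁻¹' Q) = sphericalLaw n t Q := by
  have hdet : S.det ≠ 0 := by
    intro h
    have := congrArg det hS
    simp [h] at this
  rw [← ellipticalLaw_mul_transpose_apply ht S hdet hQ, hS]
  simp [ellipticalLaw, sphericalLaw]

/-- Replacing the normal vector of one half-space by another of the same length, having larger inner
products with the remaining normals, increases the spherical measure of the intersection. -/
lemma sphericalLaw_le_of_replace_row {n : ℕ} {t : ℝ → ℝ} (ht : Measurable t)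
    (A B : Matrix (Fin n) (Fin n) ℝ) (j : Fin n) (hrow : ∀ k, k ≠ j → B k = A k)
    (hnorm : B j ⬝ᵥ B j = A j ⬝ᵥ A j)
    (hle : ∀ k, k ≠ j → A k ⬝ᵥ A j ≤ A k ⬝ᵥ B j) (c : ℝ) :
    sphericalLaw n t {z | ∀ k, (A *ᵥ z) k ≤ c} ≤ sphericalLaw n t {z | ∀ k, (B *ᵥ z) k ≤ c} := by
  obtain ⟨S, hS, hSa, hSb, κ, hκ, hSw⟩ := exists_reflection (A j) (B j) hnorm
  have hm : ∀ C : Matrix (Fin n) (Fin n) ℝ, MeasurableSet {z | ∀ k, (C *ᵥ z) k ≤ c} := by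
    intro C
    have : MeasurableSet {x : Fin n → ℝ | ∀ k, x k ≤ c} := measurableSet_Iic (a := fun _ => c)
    exact (show Measurable (fun z : Fin n → ℝ => C *ᵥ z) by fun_prop) this
  set P := {z | ∀ k, (A *ᵥ z) k ≤ c} with hP
  set R := {z | ∀ k, (B *ᵥ z) k ≤ c} with hR
  have hsub : P \ R ⊆ (fun z => S *ᵥ z) ⁻¹' (R \ P) := by
    rintro z ⟨hzP, hzR⟩
    have hzP' : ∀ k, A k ⬝ᵥ z ≤ c := hzP
    have hBj : c < B j ⬝ᵥ z := by
      by_contra hcon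
      push Not at hcon
      apply hzR
      intro k
      by_cases hk : k = j
      · subst hk; exact hcon
      · change B k ⬝ᵥ z ≤ c
        rw [hrow k hk]; exact hzP' k
    refine ⟨?_, ?_⟩
    · intro k
      change B k ⬝ᵥ (S *ᵥ z) ≤ c
      by_cases hk : k = j
      · subst hk; rw [hSb]; exact hzP' k
      · rw [hrow k hk, hSw, sub_dotProduct]
        have h1 : A j ⬝ᵥ z - B j ⬝ᵥ z ≤ 0 := by linarith [hzP' j]
        have h2 : A k ⬝ᵥ A j - A k ⬝ᵥ B j ≤ 0 := by linarith [hle k hk]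
        have h3 := mul_nonneg hκ (mul_nonneg_of_nonpos_of_nonpos h1 h2)
        linarith [hzP' k]
    · intro hcon
      have : A j ⬝ᵥ (S *ᵥ z) ≤ c := hcon j
      rw [hSa] at this
      linarith
  calc sphericalLaw n t P
      = sphericalLaw n t (P ∩ R) + sphericalLaw n t (P \ R) :=
        (measure_inter_add_sdiff P (hm B)).symm
    _ ≤ sphericalLaw n t (R ∩ P) + sphericalLaw n t (R \ P) := by
        rw [Set.inter_comm]
        refine add_le_add le_rfl ?_
        rw [← sphericalLaw_preimage ht S hS ((hm B).diff (hm A))]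
        exact measure_mono hsub
    _ = sphericalLaw n t R := measure_inter_add_sdiff R (hm A)

/-! ### Changing one row of the scale matrix -/

open scoped MatrixOrder in
lemma exists_mul_transpose_eq {n : ℕ} {M : Matrix (Fin n) (Fin n) ℝ} (hM : M.PosDef) :
    ∃ A : Matrix (Fin n) (Fin n) ℝ, A.det ≠ 0 ∧ A * Aᵀ = M := by
  obtain ⟨C, hC⟩ := CStarAlgebra.nonneg_iff_eq_star_mul_self.mp hM.posSemidef.nonneg
  have h : Cᵀ * Cᵀᵀ = M := by rw [hC, star_eq_conjTranspose]; simp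
  refine ⟨Cᵀ, ?_, h⟩
  intro h0
  have := hM.det_pos
  rw [← h, det_mul, h0] at this
  simp at this

/-- Two positive definite matrices agreeing off row and column `j` are Gram matrices of the rows of
matrices agreeing off row `j`. The new row is the vector in the span of the other rows with the
prescribed inner products, plus a multiple of a vector orthogonal to all of them; the length left
for that multiple is positive because `M'` is positive definite. -/
lemma exists_factors {n : ℕ} {M M' : Matrix (Fin n) (Fin n) ℝ} (hM : M.PosDef)
    (hM' : M'.PosDef) (j : Fin n) (hoff : ∀ k l, k ≠ j → l ≠ j → M k l = M' k l) :
    ∃ A B : Matrix (Fin n) (Fin n) ℝ, A.det ≠ 0 ∧ B.det ≠ 0 ∧ A * Aᵀ = M ∧ B * Bᵀ = M' ∧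
      ∀ k, k ≠ j → B k = A k := by
  obtain ⟨A, hA, hAM⟩ := exists_mul_transpose_eq hM
  have hM'det : IsUnit M'.det := isUnit_iff_ne_zero.mpr hM'.det_pos.ne'
  have hsymm : ∀ k l, M' k l = M' l k := fun k l => by simpa using hM'.isHermitian.apply l k
  -- `β` holds the coefficients, on the rows other than `j`, of the projection of the new row onto
  -- their span; `1 / q j` is the Schur complement of `M'` at `j`, the squared residual length.
  set q : Fin n → ℝ := M'⁻¹ *ᵥ Pi.single j 1 with hq
  have hqj : 0 < q j := by simpa [hq] using hM'.inv.diag_pos (i := j)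
  have hM'q : M' *ᵥ q = Pi.single j 1 := by
    rw [hq, mulVec_mulVec, mul_nonsing_inv _ hM'det, one_mulVec]
  set β : Fin n → ℝ := Pi.single j 1 - (q j)⁻¹ • q with hβ
  have hβj : β j = 0 := by simp [hβ, hqj.ne']
  have hM'β : M' *ᵥ β = M' *ᵥ Pi.single j 1 - (q j)⁻¹ • Pi.single j 1 := by
    rw [hβ, mulVec_sub, mulVec_smul, hM'q]
  have hMβ : ∀ k, k ≠ j → (M *ᵥ β) k = M' k j := by
    intro k hk
    have h1 : (M *ᵥ β) k = (M' *ᵥ β) k := by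
      simp only [mulVec, dotProduct]
      refine Finset.sum_congr rfl fun l _ => ?_
      by_cases hl : l = j
      · subst hl; simp [hβj]
      · rw [hoff k l hk hl]
    rw [h1, hM'β]
    simp [hk]
  have hββ : β ⬝ᵥ (M *ᵥ β) = M' j j - (q j)⁻¹ := by
    have h1 : β ⬝ᵥ (M *ᵥ β) = (M' *ᵥ β) j := by
      simp only [mulVec, dotProduct]
      refine Finset.sum_congr rfl fun k _ => ?_
      by_cases hk : k = j
      · subst hk; simp [hβj]
      · have := hMβ k hk
        simp only [mulVec, dotProduct] at this
        rw [this, hsymm k j, mul_comm]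
    rw [h1, hM'β]
    simp
  -- `d` is orthogonal to every row of `A` except row `j`.
  set d : Fin n → ℝ := A⁻¹ *ᵥ Pi.single j 1 with hd
  have hAd : A *ᵥ d = Pi.single j 1 := by
    rw [hd, mulVec_mulVec, mul_nonsing_inv _ (isUnit_iff_ne_zero.mpr hA), one_mulVec]
  have hd0 : d ≠ 0 := by
    intro h
    have := congrFun hAd j
    simp [h] at this
  have hdd : 0 < d ⬝ᵥ d := by
    have := dotProduct_star_self_pos_iff.mpr hd0
    simpa using this
  set s : ℝ := Real.sqrt ((q j)⁻¹ / (d ⬝ᵥ d)) with hs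
  have hss : s * s * (d ⬝ᵥ d) = (q j)⁻¹ := by
    rw [hs, Real.mul_self_sqrt (by positivity)]
    field_simp
  set b : Fin n → ℝ := Aᵀ *ᵥ β + s • d with hb
  have hdβ : d ⬝ᵥ (Aᵀ *ᵥ β) = 0 := by
    rw [dotProduct_mulVec, vecMul_transpose, hAd]
    simp [hβj]
  have hbb : b ⬝ᵥ b = M' j j := by
    have h1 : (Aᵀ *ᵥ β) ⬝ᵥ (Aᵀ *ᵥ β) = β ⬝ᵥ (M *ᵥ β) := by
      rw [← hAM, ← mulVec_mulVec, dotProduct_mulVec β, ← mulVec_transpose]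
    have h2 : b ⬝ᵥ b = (Aᵀ *ᵥ β) ⬝ᵥ (Aᵀ *ᵥ β) + 2 * s * (d ⬝ᵥ (Aᵀ *ᵥ β))
        + s * s * (d ⬝ᵥ d) := by
      simp only [hb, add_dotProduct, dotProduct_add, smul_dotProduct, dotProduct_smul, smul_eq_mul,
        dotProduct_comm (Aᵀ *ᵥ β) d]
      ring
    rw [h2, h1, hββ, hdβ, hss]; ring
  have hAb : ∀ k, k ≠ j → A k ⬝ᵥ b = M' k j := by
    intro k hk
    have h1 : (A *ᵥ b) k = M' k j := by
      rw [hb, mulVec_add, mulVec_smul, hAd, mulVec_mulVec, hAM]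
      simp [hk, hMβ k hk]
    exact h1
  have hBrow : ∀ k, k ≠ j → (A.updateRow j b) k = A k := fun k hk => updateRow_ne hk
  have hBM : A.updateRow j b * (A.updateRow j b)ᵀ = M' := by
    ext k l
    change (A.updateRow j b) k ⬝ᵥ (A.updateRow j b) l = M' k l
    by_cases hk : k = j
    · subst hk
      by_cases hl : l = k
      · subst hl; simpa using hbb
      · rw [hBrow l hl, updateRow_self, dotProduct_comm, hAb l hl, hsymm]
    · by_cases hl : l = j
      · subst hl
        rw [hBrow k hk, updateRow_self, hAb k hk]
      · rw [hBrow k hk, hBrow l hl, ← hoff k l hk hl, ← hAM]; rfl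
  refine ⟨A, A.updateRow j b, hA, ?_, hAM, hBM, hBrow⟩
  intro h0
  have := hM'.det_pos
  rw [← hBM, det_mul, h0] at this
  simp at this

lemma ellipticalLaw_le_of_row {n : ℕ} {t : ℝ → ℝ} (ht : Measurable t)
    {M M' : Matrix (Fin n) (Fin n) ℝ} (hM : M.PosDef) (hM' : M'.PosDef) (j : Fin n)
    (hoff : ∀ k l, k ≠ j → l ≠ j → M k l = M' k l) (hdiag : M j j = M' j j)
    (hle : ∀ k, k ≠ j → M k j ≤ M' k j) (c : ℝ) :
    ellipticalLaw t M {x | ∀ k, x k ≤ c} ≤ ellipticalLaw t M' {x | ∀ k, x k ≤ c} := by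
  obtain ⟨A, B, hA, hB, rfl, rfl, hrow⟩ := exists_factors hM hM' j hoff
  have hQ : MeasurableSet {x : Fin n → ℝ | ∀ k, x k ≤ c} := measurableSet_Iic (a := fun _ => c)
  rw [ellipticalLaw_mul_transpose_apply ht A hA hQ, ellipticalLaw_mul_transpose_apply ht B hB hQ]
  refine sphericalLaw_le_of_replace_row ht A B j hrow hdiag.symm (fun k hk => ?_) c
  have h := hle k hk
  change A k ⬝ᵥ A j ≤ B k ⬝ᵥ B j at h
  rwa [hrow k hk] at h

/-! ### The staircase between two scale matrices -/

/-- The matrix that keeps only the entries of `T` with both indices in `s`, the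
others being replaced by `0`. -/
def principalPart {n : ℕ} (T : Matrix (Fin n) (Fin n) ℝ) (s : Finset (Fin n)) :
    Matrix (Fin n) (Fin n) ℝ :=
  Matrix.of fun i j => if i ∈ s ∧ j ∈ s then T i j else 0

/-- Adding `T` row by row, which is possible as long as all intermediate matrices are positive
definite. -/
lemma ellipticalLaw_le_add {n : ℕ} {t : ℝ → ℝ} (ht : Measurable t)
    {M T : Matrix (Fin n) (Fin n) ℝ} (hpos : ∀ s, (M + principalPart T s).PosDef)
    (hT0 : ∀ i, T i i = 0) (hT : ∀ i j, i ≠ j → 0 ≤ T i j) (c : ℝ) :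
    ellipticalLaw t M {x | ∀ k, x k ≤ c} ≤ ellipticalLaw t (M + T) {x | ∀ k, x k ≤ c} := by
  have key : ∀ s, ellipticalLaw t M {x | ∀ k, x k ≤ c} ≤
      ellipticalLaw t (M + principalPart T s) {x | ∀ k, x k ≤ c} := by
    intro s
    induction s using Finset.induction_on with
    | empty =>
      have : principalPart T ∅ = 0 := by ext; simp [principalPart]
      rw [this, add_zero]
    | insert j s hj ih =>
      refine ih.trans (ellipticalLaw_le_of_row ht (hpos s) (hpos _) j ?_ ?_ ?_ c)
      · intro k l hk hl
        simp [principalPart, hk, hl]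
      · simp [principalPart, hT0]
      · intro k hk
        have := hT k j hk
        simp only [principalPart, Matrix.add_apply, of_apply, Finset.mem_insert, hk, hj]
        split_ifs <;> simp_all
  have huniv : principalPart T Finset.univ = T := by ext; simp [principalPart]
  simpa [huniv] using key Finset.univ

/-- A positive definite form is bounded below by a positive multiple of the squared sup norm. -/
lemma exists_coercive {n : ℕ} {M : Matrix (Fin n) (Fin n) ℝ} (hM : M.PosDef) :
    ∃ r : ℝ, 0 < r ∧ ∀ x : Fin n → ℝ, r * ‖x‖ ^ 2 ≤ x ⬝ᵥ M *ᵥ x := by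
  have hcont : Continuous fun x : Fin n → ℝ => x ⬝ᵥ M *ᵥ x := by fun_prop
  rcases (Metric.sphere (0 : Fin n → ℝ) 1).eq_empty_or_nonempty with he | hne
  · refine ⟨1, one_pos, fun x => ?_⟩
    by_cases hx : x = 0
    · simp [hx]
    · exfalso
      have : (‖x‖⁻¹ • x) ∈ Metric.sphere (0 : Fin n → ℝ) 1 := by simp [norm_smul, hx]
      simp [he] at this
  · obtain ⟨y, hy, hmin⟩ := (isCompact_sphere (0 : Fin n → ℝ) 1).exists_isMinOn hne
      hcont.continuousOn
    have hy0 : y ≠ 0 := by rintro rfl; simp at hy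
    refine ⟨_, by simpa using hM.dotProduct_mulVec_pos hy0, fun x => ?_⟩
    by_cases hx : x = 0
    · simp [hx]
    · have hmem : (‖x‖⁻¹ • x) ∈ Metric.sphere (0 : Fin n → ℝ) 1 := by simp [norm_smul, hx]
      have h := hmin hmem
      simp only [Set.mem_ofPred_eq, mulVec_smul, smul_dotProduct, dotProduct_smul, smul_eq_mul] at h
      have hx' : 0 < ‖x‖ := norm_pos_iff.mpr hx
      calc _ ≤ ‖x‖⁻¹ * (‖x‖⁻¹ * (x ⬝ᵥ M *ᵥ x)) * ‖x‖ ^ 2 := by gcongr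
        _ = _ := by field_simp

lemma abs_form_principalPart_le {n : ℕ} (T : Matrix (Fin n) (Fin n) ℝ) (s : Finset (Fin n))
    (x : Fin n → ℝ) :
    |x ⬝ᵥ principalPart T s *ᵥ x| ≤ (∑ i, ∑ j, |T i j|) * ‖x‖ ^ 2 := by
  simp only [dotProduct, mulVec, Finset.mul_sum, Finset.sum_mul]
  refine (Finset.abs_sum_le_sum_abs _ _).trans (Finset.sum_le_sum fun i _ => ?_)
  refine (Finset.abs_sum_le_sum_abs _ _).trans (Finset.sum_le_sum fun j _ => ?_)
  have hi : |x i| ≤ ‖x‖ := norm_le_pi_norm x i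
  have hj : |x j| ≤ ‖x‖ := norm_le_pi_norm x j
  have hT : |principalPart T s i j| ≤ |T i j| := by
    simp only [principalPart, of_apply]
    split_ifs <;> simp
  rw [abs_mul, abs_mul]
  calc _ ≤ ‖x‖ * (|T i j| * ‖x‖) := by gcongr
    _ = _ := by ring

/-- Slepian's inequality for elliptically contoured laws: the mass of an orthant increases with the
off-diagonal entries of the scale matrix. -/
lemma ellipticalLaw_orthant_mono {n : ℕ} {t : ℝ → ℝ} (ht : Measurable t)
    {M M' : Matrix (Fin n) (Fin n) ℝ} (hM : M.PosDef) (hM' : M'.PosDef)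
    (hdiag : ∀ i, M i i = M' i i) (hle : ∀ i j, i ≠ j → M i j ≤ M' i j) (c : ℝ) :
    ellipticalLaw t M {x | ∀ k, x k ≤ c} ≤ ellipticalLaw t M' {x | ∀ k, x k ≤ c} := by
  obtain ⟨r₁, hr₁, h₁⟩ := exists_coercive hM
  obtain ⟨r₂, hr₂, h₂⟩ := exists_coercive hM'
  set T := M' - M with hTdef
  set r := min r₁ r₂ with hr
  have hrpos : 0 < r := lt_min hr₁ hr₂
  set K := ∑ i, ∑ j, |T i j| with hK
  -- A perturbation of size `K / N` stays below the coercivity constant `r` of the segment.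
  obtain ⟨N, hN⟩ := exists_nat_gt (K / r)
  have hKnn : 0 ≤ K := Finset.sum_nonneg fun i _ => Finset.sum_nonneg fun j _ => abs_nonneg _
  have hNpos : (0 : ℝ) < N := lt_of_le_of_lt (by positivity) hN
  have hKN : (N : ℝ)⁻¹ * K < r := by
    rw [div_lt_iff₀ hrpos] at hN
    rw [inv_mul_lt_iff₀ hNpos]
    exact hN
  have hTs : ∀ i j, T i j = T j i := fun i j => by
    have e1 := hM.isHermitian.apply i j
    have e2 := hM'.isHermitian.apply i j
    simp at e1 e2
    simp [hTdef, e1, e2]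
  have hpp : ∀ s, principalPart ((N : ℝ)⁻¹ • T) s = (N : ℝ)⁻¹ • principalPart T s := by
    intro s; ext i j; simp [principalPart]
  have hpos : ∀ (k : ℕ), k ≤ N → ∀ s,
      (M + ((k : ℝ) / N) • T + principalPart ((N : ℝ)⁻¹ • T) s).PosDef := by
    intro k hk s
    rw [hpp]
    have hk1 : (k : ℝ) / N ≤ 1 := by
      rw [div_le_one hNpos]; exact_mod_cast hk
    have hk0 : 0 ≤ (k : ℝ) / N := by positivity
    set u := (k : ℝ) / N
    refine PosDef.of_dotProduct_mulVec_pos ?_ ?_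
    · ext i j
      have e1 := hM.isHermitian.apply i j
      simp at e1
      simp [principalPart, hTs j i, e1, and_comm]
    · intro x hx
      have hxn : 0 < ‖x‖ ^ 2 := by have := norm_pos_iff.mpr hx; positivity
      -- `M + u • T` is the convex combination of `M` and `M'` with weight `u`.
      have e1 : r * ‖x‖ ^ 2 ≤ x ⬝ᵥ M *ᵥ x := le_trans (by gcongr; exact min_le_left _ _) (h₁ x)
      have e2 : r * ‖x‖ ^ 2 ≤ x ⬝ᵥ M' *ᵥ x := le_trans (by gcongr; exact min_le_right _ _) (h₂ x)
      have e3 := (abs_le.mp (abs_form_principalPart_le T s x)).1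
      have e4 : x ⬝ᵥ T *ᵥ x = x ⬝ᵥ M' *ᵥ x - x ⬝ᵥ M *ᵥ x := by
        rw [hTdef, sub_mulVec, dotProduct_sub]
      have e5 : (N : ℝ)⁻¹ * (-(K * ‖x‖ ^ 2)) ≤ (N : ℝ)⁻¹ * (x ⬝ᵥ principalPart T s *ᵥ x) := by
        gcongr
      have e6 : (N : ℝ)⁻¹ * K * ‖x‖ ^ 2 < r * ‖x‖ ^ 2 := by gcongr
      simp only [star_trivial, add_mulVec, smul_mulVec, dotProduct_add, dotProduct_smul,
        smul_eq_mul, e4]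
      have e7 := mul_le_mul_of_nonneg_left e2 hk0
      have e8 := mul_le_mul_of_nonneg_left e1 (sub_nonneg.mpr hk1)
      nlinarith
  have hchain : ∀ k : ℕ, k ≤ N → ellipticalLaw t M {x | ∀ k, x k ≤ c} ≤
      ellipticalLaw t (M + ((k : ℝ) / N) • T) {x | ∀ k, x k ≤ c} := by
    intro k
    induction k with
    | zero => intro _; simp
    | succ k ih =>
      intro hk
      refine (ih (by omega)).trans ?_
      have h := ellipticalLaw_le_add ht (hpos k (by omega))
        (fun i => by simp [hTdef, hdiag]) (fun i j hij => by
          have := hle i j hij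
          simp only [hTdef, Matrix.smul_apply, Matrix.sub_apply, smul_eq_mul]
          exact mul_nonneg (by positivity) (by linarith)) c
      have hstep : M + ((k + 1 : ℕ) / (N : ℝ)) • T
          = M + ((k : ℝ) / N) • T + (N : ℝ)⁻¹ • T := by
        rw [add_assoc, ← add_smul]
        congr 2
        push_cast
        ring
      rw [hstep]
      exact h
  have h := hchain N le_rfl
  rwa [div_self hNpos.ne', one_smul, hTdef, add_sub_cancel] at h

/-- Corollary of the Das Gupta inequality: if `(X_1, …, X_n)` is
elliptically contoured with correlations `ρ_{ij} ≥ δ` and `(Y_1, …, Y_n)` is elliptically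
contoured with the same generator and equicorrelation matrix `Γ_n(δ)`, then
`P(X_i > c for some i) ≤ P(Y_i > c for some i)`. -/
theorem elliptical_exceedance_probability_le_equicorrelated
    {n : ℕ}
    (t : ℝ → ℝ) (htmeas : Measurable t) (htnn : ∀ x : ℝ, 0 ≤ x → 0 ≤ t x)
    (htint : IntegrableOn (fun r : ℝ => r ^ (n - 1) * t (r ^ 2)) (Set.Ioi (0:ℝ)))
    (δ : ℝ) (hδ : δ ∈ Set.Ioo (0:ℝ) 1)
    (Smat : Matrix (Fin n) (Fin n) ℝ) (hSpos : Smat.PosDef)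
    (hSdiag : ∀ i, Smat i i = 1)
    (hSδ : ∀ i j, i ≠ j → δ ≤ Smat i j)
    (Γ : Matrix (Fin n) (Fin n) ℝ)
    (hΓ : Γ = Matrix.of fun i j => if i = j then (1:ℝ) else δ)
    (hΓpos : Γ.PosDef)
    (μX μY : Measure (Fin n → ℝ))
    (hμX : μX = volume.withDensity fun x =>
      ENNReal.ofReal (Smat.det ^ (-(1/2) : ℝ) * t (x ⬝ᵥ Smat⁻¹.mulVec x)))
    (hμY : μY = volume.withDensity fun x =>
      ENNReal.ofReal (Γ.det ^ (-(1/2) : ℝ) * t (x ⬝ᵥ Γ⁻¹.mulVec x)))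
    (hPX : IsProbabilityMeasure μX) (hPY : IsProbabilityMeasure μY)
    (c : ℝ) :
    μX {x | ∃ i, x i > c} ≤ μY {x | ∃ i, x i > c} := by
  have hset : {x : Fin n → ℝ | ∃ i, x i > c} = {x | ∀ i, x i ≤ c}ᶜ := by
    ext x; simp
  have hQ : MeasurableSet {x : Fin n → ℝ | ∀ k, x k ≤ c} := measurableSet_Iic (a := fun _ => c)
  rw [hset, prob_compl_eq_one_sub hQ, prob_compl_eq_one_sub hQ]
  refine tsub_le_tsub_left ?_ 1
  have h := ellipticalLaw_orthant_mono htmeas hΓpos hSpos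
    (fun i => by simp [hΓ, hSdiag]) (fun i j hij => by simpa [hΓ, hij] using hSδ i j hij) c
  rw [hμX, hμY]
  exact h
end

section
/- (Theorem 5.4, Gordon) Let n ≥ 1, α ∈ (0,1), and let 0 ≤ u_1 ≤ … ≤ u_n ≤ 1 be the cutoffs of a step-down procedure T. Suppose that T controls the familywise error rate at level α under arbitrary dependence: for every probability space, every subset A ⊆ {1, …, n}, and every random vector (P_1, …, P_n) with values in [0,1] such that P_i is uniformly distributed on [0,1] for each i ∈ A, the probability that T rejects at least one hypothesis with index in A is at most α. Then u_i ≤ α/(n − i + 1) for every i = 1, …, n. -/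
/-!
The bound for the `j`-th cutoff (indices start at `0`, so `m = n - j` hypotheses have index at
least `j`) comes from a single least favourable joint distribution. Let the hypotheses of index
`< j` be false, with p-value constantly `0`, and let the others be true nulls. If some true null
has p-value at most `u j`, then at least `j + 1` p-values are small enough for the procedure to make
`j + 1` rejections, and since there are only `j` false hypotheses, a true null is among them
(`exists_rejects_of_le`).

The true nulls receive the p-values `rep (ω + i / m)`, where `ω` is uniform on the circle `ℝ / ℤ`
and `rep` is the representative in `(0, 1]`. Each of them is uniform (`volume_rep_add_le`), and for
`t < 1 / m` the events `{rep (ω + i / m) ≤ t}` are arcs of length `t` starting at points with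
mutual distance at least `1 / m`, hence disjoint (`eq_of_rep_le`). So a false rejection has
probability at least `m * t` whenever `t ≤ u j` and `t < 1 / m`. Were `u j > α / m`, a `t` slightly
larger than `α / m` would satisfy both constraints and contradict the control at level `α`.
-/

open MeasureTheory ProbabilityTheory Filter Classical

/-- The number of rejections of the step-down multiple testing procedure with cutoffs
`u_1 ≤ … ≤ u_n` applied to p-values `p`: it is `M = max {m : P_(j) ≤ u_j for all j ≤ m}`,
where `P_(1) ≤ … ≤ P_(n)` are the ordered p-values. -/
noncomputable def stepDownNumRejections {n : ℕ} (u p : Fin n → ℝ) : ℕ :=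
  Nat.findGreatest (fun m => ∀ j : Fin n, (j : ℕ) < m → p (Tuple.sort p j) ≤ u j) n

/-- The step-down procedure with cutoffs `u` applied to p-values `p` rejects the
hypotheses corresponding to the `M` smallest p-values. -/
def stepDownRejects {n : ℕ} (u p : Fin n → ℝ) (i : Fin n) : Prop :=
  ∃ j : Fin n, (j : ℕ) < stepDownNumRejections u p ∧ Tuple.sort p j = i

/-- If at least `k + 1` of the p-values are at most `c`, then so is the `k`-th smallest one
(counting from `0`). -/
lemma sort_le_of_lt_card {n : ℕ} (p : Fin n → ℝ) (S : Finset (Fin n)) (c : ℝ)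
    (hS : ∀ i ∈ S, p i ≤ c) (k : Fin n) (hk : (k : ℕ) < S.card) :
    p (Tuple.sort p k) ≤ c := by
  by_contra! hc
  have hmaps : Set.MapsTo (Tuple.sort p).symm (S : Set (Fin n)) (Finset.Iio k : Finset (Fin n)) := by
    intro i hi
    by_contra hik
    have hki : k ≤ (Tuple.sort p).symm i := by simpa using hik
    have h := Tuple.monotone_sort p hki
    simp only [Function.comp_apply, Equiv.apply_symm_apply] at h
    linarith [hS i hi]
  have := Finset.card_le_card_of_injOn _ hmaps (Tuple.sort p).symm.injective.injOn
  rw [Fin.card_Iio] at this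
  omega

/-- If the hypotheses of index below `j` have p-value `0` and some other hypothesis has p-value at
most the cutoff `u j`, then a hypothesis of index at least `j` is rejected. -/
lemma exists_rejects_of_le {n : ℕ} (u : ℕ → ℝ) (hu : ∀ k < n, 0 ≤ u k) (p : Fin n → ℝ)
    (j : ℕ) (hj : j < n) (hp : ∀ i : Fin n, (i : ℕ) < j → p i = 0)
    (i₀ : Fin n) (hi₀ : j ≤ i₀) (hle : p i₀ ≤ u j) :
    ∃ i : Fin n, j ≤ i ∧ stepDownRejects (fun k : Fin n => u k) p i := by
  have hM : j + 1 ≤ stepDownNumRejections (fun k : Fin n => u k) p := by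
    refine Nat.le_findGreatest hj fun k hk => ?_
    rcases Nat.lt_succ_iff_lt_or_eq.1 hk with hkj | hkj
    · refine sort_le_of_lt_card p (Finset.Iio ⟨j, hj⟩) _ (fun i hi => ?_) k (by simpa using hkj)
      rw [hp i (by simpa [Fin.lt_def] using hi)]
      exact hu k k.2
    · refine sort_le_of_lt_card p (insert i₀ (Finset.Iio ⟨j, hj⟩)) _ (fun i hi => ?_) k ?_
      · rcases Finset.mem_insert.1 hi with rfl | hi
        · simpa [hkj] using hle
        · rw [hp i (by simpa [Fin.lt_def] using hi)]
          exact hu k k.2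
      · rw [Finset.card_insert_of_notMem (by simpa [Fin.le_def] using hi₀), Fin.card_Iio]
        simpa using hk
  -- Otherwise the `j + 1` smallest p-values would all belong to the `j` indices below `j`.
  by_contra! hno
  have hmaps : Set.MapsTo (Tuple.sort p) (Finset.Iic (⟨j, hj⟩ : Fin n) : Finset (Fin n))
      (Finset.Iio (⟨j, hj⟩ : Fin n) : Finset (Fin n)) := by
    intro k hk
    have hk : (k : ℕ) ≤ j := by simpa [Fin.le_def] using hk
    by_contra h
    refine hno (Tuple.sort p k) ?_ ⟨k, by omega, rfl⟩
    simpa [Fin.le_def] using h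
  have := Finset.card_le_card_of_injOn _ hmaps (Tuple.sort p).injective.injOn
  rw [Fin.card_Iio, Fin.card_Iic] at this
  simp at this

/-- The representative in `(0, 1]` of a point of the circle `ℝ / ℤ`. -/
noncomputable def rep (ω : UnitAddCircle) : ℝ := AddCircle.equivIoc 1 0 ω

lemma rep_mem (ω : UnitAddCircle) : rep ω ∈ Set.Ioc (0 : ℝ) 1 := by
  simpa [rep] using (AddCircle.equivIoc (1 : ℝ) 0 ω).2

lemma coe_rep (ω : UnitAddCircle) : (rep ω : UnitAddCircle) = ω :=
  AddCircle.coe_equivIoc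

lemma measurable_rep : Measurable rep :=
  measurable_subtype_coe.comp (AddCircle.measurableEquivIoc (1 : ℝ) 0).measurable

lemma measurableSet_rep_add_le (c : UnitAddCircle) (x : ℝ) :
    MeasurableSet {ω : UnitAddCircle | rep (ω + c) ≤ x} :=
  measurableSet_le (measurable_rep.comp (measurable_add_const c)) measurable_const

/-- A rotated uniform variable on the circle has a uniform representative. -/
lemma volume_rep_add_le (c : UnitAddCircle) {x : ℝ} (hx : x ≤ 1) :
    volume {ω : UnitAddCircle | rep (ω + c) ≤ x} = ENNReal.ofReal x := by
  have h1 : volume {ω : UnitAddCircle | rep (ω + c) ≤ x}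
      = volume {ω : UnitAddCircle | rep ω ≤ x} :=
    measure_preimage_add_right volume c {ω : UnitAddCircle | rep ω ≤ x}
  have hm : MeasurableSet {ω : UnitAddCircle | rep ω ≤ x} :=
    measurableSet_le measurable_rep measurable_const
  rw [h1, AddCircle.add_projection_respects_measure 1 0 hm]
  have h2 : (QuotientAddGroup.mk ⁻¹' {ω : UnitAddCircle | rep ω ≤ x} ∩ Set.Ioc (0 : ℝ) (0 + 1))
      = Set.Ioc 0 x := by
    ext y
    have hrep : y ∈ Set.Ioc (0 : ℝ) (0 + 1) → rep (QuotientAddGroup.mk y) = y := fun hy =>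
      AddCircle.equivIoc_coe_of_mem hy
    constructor
    · rintro ⟨hy, hy'⟩
      have hy : rep (QuotientAddGroup.mk y) ≤ x := hy
      rw [hrep hy'] at hy
      exact ⟨hy'.1, hy⟩
    · rintro ⟨hy0, hyx⟩
      have hy' : y ∈ Set.Ioc (0 : ℝ) (0 + 1) := ⟨hy0, by linarith⟩
      refine ⟨?_, hy'⟩
      change rep (QuotientAddGroup.mk y) ≤ x
      rwa [hrep hy']
  rw [h2, Real.volume_Ioc, sub_zero]

/-- Arcs of length `t < 1 / m` starting at two distinct multiples of `1 / m` modulo `1` are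
disjoint. -/
lemma eq_of_rep_le {m : ℕ} {i k : ℕ} (hik : |(i : ℤ) - k| < m) {t : ℝ} (ht : t * m < 1)
    {ω : UnitAddCircle}
    (hi : rep (ω + ((i / m : ℝ) : UnitAddCircle)) ≤ t)
    (hk : rep (ω + ((k / m : ℝ) : UnitAddCircle)) ≤ t) : i = k := by
  have hm : (0 : ℝ) < m := by
    have : (0 : ℤ) < m := lt_of_le_of_lt (abs_nonneg _) hik
    exact_mod_cast this
  set a := rep (ω + ((i / m : ℝ) : UnitAddCircle)) with ha
  set b := rep (ω + ((k / m : ℝ) : UnitAddCircle)) with hb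
  have ha0 : 0 < a := (rep_mem _).1
  have hb0 : 0 < b := (rep_mem _).1
  have hz : (((a - b) - (i / m - k / m) : ℝ) : UnitAddCircle) = 0 := by
    rw [AddCircle.coe_sub, AddCircle.coe_sub, AddCircle.coe_sub, ha, hb, coe_rep, coe_rep]
    abel
  obtain ⟨N, hN⟩ := (AddCircle.coe_eq_zero_iff 1).1 hz
  have hN : ((i : ℝ) - k + N * m) = (a - b) * m := by
    have : (N : ℝ) = (a - b) - (i / m - k / m) := by simpa using hN
    rw [this]
    field_simp
    ring
  -- `i - k + N * m` is an integer equal to `(a - b) * m`, which lies strictly between `-1` and `1`.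
  have hlt : (a - b) * m < 1 := by nlinarith
  have hgt : -1 < (a - b) * m := by nlinarith
  rw [← hN] at hlt hgt
  have hlt' : (i : ℤ) - k + N * m < 1 := by exact_mod_cast hlt
  have hgt' : -1 < (i : ℤ) - k + N * m := by exact_mod_cast hgt
  have h0 : (i : ℤ) - k = m * -N := by linarith [show (i : ℤ) - k + N * m = 0 by omega]
  have := Int.eq_zero_of_abs_lt_dvd ⟨-N, h0⟩ hik
  omega

/-- Theorem 5.4, Gordon: if a step-down procedure with nondecreasing
cutoffs `u_1 ≤ … ≤ u_n` in `[0,1]` controls the FWER at level `α < 1` under arbitrary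
dependence (for p-values that are uniform on `[0,1]` for the true nulls), then its
cutoffs satisfy `u_i ≤ α/(n − i + 1)`, i.e. `u (j+1) ≤ α/(n − j)` with 0-indexing. -/
theorem gordon_stepdown_cutoff_bound
    (n : ℕ) (hn : 1 ≤ n) (α : ℝ) (hα : α ∈ Set.Ioo (0:ℝ) 1)
    (u : ℕ → ℝ)
    (humono : ∀ j k : ℕ, j ≤ k → k < n → u j ≤ u k)
    (hurange : ∀ j : ℕ, j < n → u j ∈ Set.Icc (0:ℝ) 1)
    (hfwer : ∀ (Ω : Type) (mΩ : MeasurableSpace Ω) (μ : Measure Ω),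
      IsProbabilityMeasure μ →
      ∀ (A : Finset (Fin n)) (P : Ω → Fin n → ℝ),
        (∀ ω i, P ω i ∈ Set.Icc (0:ℝ) 1) →
        (∀ i ∈ A, ∀ x ∈ Set.Icc (0:ℝ) 1, μ {ω | P ω i ≤ x} = ENNReal.ofReal x) →
        μ {ω | ∃ i ∈ A, stepDownRejects (fun j : Fin n => u j) (P ω) i}
          ≤ ENNReal.ofReal α) :
    ∀ j : ℕ, j < n → u j ≤ α / (n - j) := by
  intro j hj
  have hm : (0 : ℝ) < (n : ℝ) - j := sub_pos.2 (by exact_mod_cast hj)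
  have hcast : ((n - j : ℕ) : ℝ) = (n : ℝ) - j := Nat.cast_sub hj.le
  by_contra! hlt
  have hα1 : α / (n - j) < 1 / (n - j) := div_lt_div_of_pos_right hα.2 hm
  obtain ⟨t, htα, ht⟩ := exists_between (lt_min hlt hα1)
  have htu : t ≤ u j := (ht.trans_le (min_le_left _ _)).le
  have htm : t * (n - j) < 1 := (lt_div_iff₀ hm).1 (ht.trans_le (min_le_right _ _))
  have hαt : α < t * (n - j) := (div_lt_iff₀ hm).1 htα
  have ht1 : t ≤ 1 := htu.trans (hurange j hj).2
  have ht0 : 0 < t := (div_pos hα.1 hm).trans htα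
  have hprob : IsProbabilityMeasure (volume : Measure UnitAddCircle) :=
    ⟨by simp⟩
  let c : Fin n → UnitAddCircle := fun i => (((i : ℕ) / (n - j : ℕ) : ℝ) : UnitAddCircle)
  let A : Finset (Fin n) := Finset.Ici ⟨j, hj⟩
  have hA : ∀ i : Fin n, i ∈ A ↔ j ≤ i := fun i => by simp [A, Fin.le_def]
  let P : UnitAddCircle → Fin n → ℝ := fun ω i => if i ∈ A then rep (ω + c i) else 0
  have hPA : ∀ ω, ∀ i ∈ A, P ω i = rep (ω + c i) := fun ω i hi => if_pos hi
  have hP : ∀ ω i, P ω i ∈ Set.Icc (0 : ℝ) 1 := by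
    intro ω i
    by_cases hi : i ∈ A
    · rw [hPA ω i hi]
      exact Set.Ioc_subset_Icc_self (rep_mem _)
    · simp [P, hi]
  have hunif : ∀ i ∈ A, ∀ x ∈ Set.Icc (0 : ℝ) 1,
      volume {ω | P ω i ≤ x} = ENNReal.ofReal x := by
    intro i hi x hx
    simp only [hPA _ i hi]
    exact volume_rep_add_le _ hx.2
  have hcontrol := hfwer UnitAddCircle _ volume hprob A P hP hunif
  have hsub : (⋃ i ∈ A, {ω : UnitAddCircle | rep (ω + c i) ≤ t})
      ⊆ {ω | ∃ i ∈ A, stepDownRejects (fun j : Fin n => u j) (P ω) i} := by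
    intro ω hω
    obtain ⟨i, hi, hle⟩ : ∃ i ∈ A, rep (ω + c i) ≤ t := by simpa using hω
    obtain ⟨l, hl, hrej⟩ := exists_rejects_of_le u (fun k hk => (hurange k hk).1) (P ω) j hj
      (fun k hk => if_neg (by rw [hA]; omega)) i ((hA i).1 hi)
      (by rw [hPA ω i hi]; exact hle.trans htu)
    exact ⟨l, (hA l).2 hl, hrej⟩
  have hdisj : (A : Set (Fin n)).PairwiseDisjoint
      fun i => {ω : UnitAddCircle | rep (ω + c i) ≤ t} := by
    intro i hi k hk hne
    refine Set.disjoint_left.2 fun ω hωi hωk => hne (Fin.ext ?_)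
    have hi' := (hA i).1 hi
    have hk' := (hA k).1 hk
    refine eq_of_rep_le (m := n - j) ?_ (by rwa [hcast]) hωi hωk
    rw [abs_lt]
    omega
  have hvol : volume (⋃ i ∈ A, {ω : UnitAddCircle | rep (ω + c i) ≤ t})
      = ENNReal.ofReal (t * (n - j)) := by
    rw [measure_biUnion_finset hdisj fun i _ => measurableSet_rep_add_le _ _,
      Finset.sum_congr rfl fun i _ => volume_rep_add_le (c i) ht1, Finset.sum_const,
      Fin.card_Ici, nsmul_eq_mul, ← hcast, mul_comm t, ENNReal.ofReal_mul (Nat.cast_nonneg _),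
      ENNReal.ofReal_natCast]
  have hle := (measure_mono hsub).trans hcontrol
  rw [hvol, ENNReal.ofReal_le_ofReal_iff hα.1.le] at hle
  exact absurd hαt (not_lt.2 hle)
end
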